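/- Let P be a finite (3+1)-free poset with |P| = n and λ/μ/d a cylindric shape with |λ/μ| = n. Writing s_{λ/μ/d}(x) = Σ_ν a_ν m_ν(x) and X_{inc(P)}(x) = Σ_{ν ⊢ n} c^P_ν e_ν(x), the linear combination Σ_ν a_ν c^P_ν equals the number of standard cylindric P-tableaux of shape λ/μ/d, i.e., cylindric P-tableaux containing each element of P exactly once. In particular Σ_ν a_ν c^P_ν ≥ 0. -/

import Mathlib

open MvPolynomial
open scoped Classical

noncomputable section

/-- A poset is `(3+1)`-free: no induced subposet consisting of a 3-chain
together with an element incomparable to all of it. -/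
def ThreePlusOneFree (P : Type*) [PartialOrder P] : Prop :=
  ¬ ∃ a b c x : P, a < b ∧ b < c ∧
    ¬(x ≤ a ∨ a ≤ x) ∧ ¬(x ≤ b ∨ b ≤ x) ∧ ¬(x ≤ c ∨ c ≤ x)

/-- The `P`-elementary function `e_k^P(u)`, the sum of `u_{i_1} ⋯ u_{i_k}`
over strict chains `i_1 <_P ⋯ <_P i_k`. -/
def eP (P : Type*) [Fintype P] [PartialOrder P] (k : ℕ) : MvPolynomial P ℤ :=
  ∑ f ∈ Finset.univ.filter (fun f : Fin k → P => ∀ a b : Fin k, a < b → f a < f b),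
    ∏ i, X (f i)

/-- `e_k^P` for an integer index, vanishing for negative `k`. -/
def ePz (P : Type*) [Fintype P] [PartialOrder P] (k : ℤ) : MvPolynomial P ℤ :=
  if 0 ≤ k then eP P k.toNat else 0

/-- Conjugate partition: `conj f c` is the length of column `c` (0-indexed)
of the diagram of `f`. -/
def conj (f : ℕ → ℕ) (c : ℕ) : ℕ := Set.ncard {i | c < f i}

/-- `f : ℕ → ℕ` (0-indexed list of parts) is a partition. -/
def IsPartition (f : ℕ → ℕ) : Prop := (∀ i, f (i + 1) ≤ f i) ∧ ∃ N, ∀ i, N ≤ i → f i = 0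

/-- `λ/μ/d` is a cylindric shape. -/
def IsCylShape (lam mu : ℕ → ℕ) (d : ℕ) : Prop :=
  IsPartition lam ∧ IsPartition mu ∧ (∀ i, mu i ≤ lam i) ∧ 0 < lam 0 ∧
    conj lam 0 ≤ conj lam (lam 0 - 1) + d ∧
    conj mu 0 ≤ conj mu (lam 0 - 1) + d ∧ d ≤ conj lam 0

section Arrays
variable {P : Type*} [PartialOrder P]

/-- Column-strictness of the array `A` (a total function; only values on the cells
of the shape `col(α,β)`, over `l` columns, matter): entries strictly increase
down each column. This is the defining condition for a `P`-array. -/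
def ColStrict (A : ℕ → ℕ → P) (l : ℕ) (α β : ℕ → ℕ) : Prop :=
  ∀ c r r', c < l → β c ≤ r → r < r' → r' < α c → A r c < A r' c

/-- `col(α,β)` (with `β` a partition) is a skew partition shape. -/
def IsSkewShape (l : ℕ) (α β : ℕ → ℕ) : Prop :=
  (∀ c, c + 1 < l → α (c + 1) ≤ α c ∧ β (c + 1) ≤ β c) ∧ ∀ c, c < l → β c ≤ α c

/-- Rows of `A` are weakly increasing in `P`: no entry is `>_P` its right neighbour. -/
def RowWeak (A : ℕ → ℕ → P) (l : ℕ) (α β : ℕ → ℕ) : Prop :=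
  ∀ r c, c + 1 < l → β c ≤ r → r < α c → β (c + 1) ≤ r → r < α (c + 1) →
    ¬ A r (c + 1) < A r c

/-- `A` is a `P`-tableau of shape `col(α,β)`. -/
def IsPTableau (A : ℕ → ℕ → P) (l : ℕ) (α β : ℕ → ℕ) : Prop :=
  IsSkewShape l α β ∧ ColStrict A l α β ∧ RowWeak A l α β

/-- The glued array `A^d`: columns `0,…,l-1` of `A` shifted down by `d`, and a copy
of column `0` of `A` as the extra column `l`. -/
def glueArr (A : ℕ → ℕ → P) (l d : ℕ) : ℕ → ℕ → P :=
  fun r c => if c < l then A (r - d) c else A r 0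

/-- Column lengths of the glued shape. -/
def glueCol (f : ℕ → ℕ) (l d : ℕ) : ℕ → ℕ :=
  fun c => if c < l then f c + d else f 0

/-- `(r,j)` is an intersection point of columns `i < j` of `A`
(shape `col(α,β)`), with witness in column `i`. -/
def IsIntPoint (A : ℕ → ℕ → P) (α β : ℕ → ℕ) (i j r : ℕ) : Prop :=
  i < j ∧ β j ≤ r ∧ r < α j ∧
    ∃ w, w + j = r + 1 + i ∧ β i ≤ w ∧ (α i ≤ w ∨ A r j < A w i)

/-- Columns `i < j` of `A` intersect. -/
def Intersecting (A : ℕ → ℕ → P) (α β : ℕ → ℕ) (i j : ℕ) : Prop :=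
  ∃ r, IsIntPoint A α β i j r

/-- `(r,j)` is a `P`-minimal intersection point of the array `A` with columns `0,…,L`. -/
def PMinIP (A : ℕ → ℕ → P) (α β : ℕ → ℕ) (L j r : ℕ) : Prop :=
  j ≤ L ∧ (∃ i, IsIntPoint A α β i j r) ∧
    ∀ j' r' i', j' ≤ L → IsIntPoint A α β i' j' r' → ¬ A r' j' < A r j

/-- `(r,j)` is the rightmost `P`-minimal intersection point. -/
def RightmostPMinIP (A : ℕ → ℕ → P) (α β : ℕ → ℕ) (L j r : ℕ) : Prop :=
  PMinIP A α β L j r ∧ ∀ j' r', PMinIP A α β L j' r' → j' ≤ j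

/-- The cylindric swap `swap(A,i,j,d)` at the `P`-minimal intersection point `m` of
columns `i < j ≤ l` of `A^d` (the minimal intersection point is the lowest-row one,
since column `j` is a chain).  Everything is in the coordinates of `A`; the case
`j = l` is the wrap-around case, where entries move between column `i` and column `0`. -/
def swapArr (A : ℕ → ℕ → P) (l d i j : ℕ) (α β : ℕ → ℕ) : ℕ → ℕ → P :=
  let m := sInf {r | IsIntPoint (glueArr A l d) (glueCol α l d) (glueCol β l d) i j r}
  if j < l then
    fun r c =>
      if c = i ∧ m + 1 + i ≤ r + j + d then A (r + (j - i)) j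
      else if c = j ∧ m + 1 ≤ r + d then A (r - (j - i)) i
      else A r c
  else
    fun r c =>
      if c = i ∧ m + 1 + i ≤ r + j + d then A (r + (j - i) + d) 0
      else if c = 0 ∧ m + 1 ≤ r then A (r - (d + (j - i))) i
      else A r c

end Arrays

/-- A cylindric `P`-tableau of shape `λ/μ/d`, encoded column by column:
`T c p` is the entry of column `c` in the `p`-th cell from the top
(global row `conj μ c + p`).  The condition is that the glued filling `T^d`
is a `P`-tableau: the glued shape is a skew shape, columns strictly increase
in `P`, and rows (including the wrap-around adjacency between the last column
and the copy of column `0` shifted up by `d`) weakly increase in `P`. -/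
def IsCylTab {P : Type*} [PartialOrder P] (lam mu : ℕ → ℕ) (d : ℕ)
    (T : ∀ c : Fin (lam 0), Fin (conj lam c - conj mu c) → P) : Prop :=
  (∀ c, c + 1 < lam 0 → conj lam (c + 1) ≤ conj lam c ∧ conj mu (c + 1) ≤ conj mu c) ∧
  (∀ c, c < lam 0 → conj mu c ≤ conj lam c) ∧
  (0 < lam 0 → conj lam 0 ≤ conj lam (lam 0 - 1) + d ∧ conj mu 0 ≤ conj mu (lam 0 - 1) + d) ∧
  (∀ c p q, p < q → T c p < T c q) ∧
  (∀ (c : Fin (lam 0)) (hc : c.1 + 1 < lam 0)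
      (p : Fin (conj lam c.1 - conj mu c.1)) (q : Fin (conj lam (c.1 + 1) - conj mu (c.1 + 1))),
      conj mu c.1 + p.1 = conj mu (c.1 + 1) + q.1 → ¬ T ⟨c.1 + 1, hc⟩ q < T c p) ∧
  (∀ (h0 : 0 < lam 0) (p : Fin (conj lam (lam 0 - 1) - conj mu (lam 0 - 1)))
      (q : Fin (conj lam 0 - conj mu 0)),
      conj mu (lam 0 - 1) + p.1 + d = conj mu 0 + q.1 →
      ¬ T ⟨0, h0⟩ q < T ⟨lam 0 - 1, Nat.sub_lt h0 Nat.one_pos⟩ p)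

/-- The `u`-monomial weight `u^T` of a tableau. -/
def uT {P : Type*} (lam mu : ℕ → ℕ)
    (T : ∀ c : Fin (lam 0), Fin (conj lam c - conj mu c) → P) : MvPolynomial P ℤ :=
  ∏ c, ∏ p, X (T c p)

/-- Number of occurrences of the value `x` in the tableau `T`. -/
def tabCount {P : Type*} (lam mu : ℕ → ℕ)
    (T : ∀ c : Fin (lam 0), Fin (conj lam c - conj mu c) → P) (x : P) : ℕ :=
  ∑ c, (Finset.univ.filter (fun p => T c p = x)).card

/-- `T` is standard: it contains each element of `P` exactly once. -/
def IsStandardTab {P : Type*} (lam mu : ℕ → ℕ)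
    (T : ∀ c : Fin (lam 0), Fin (conj lam c - conj mu c) → P) : Prop :=
  ∀ x : P, tabCount lam mu T x = 1

/-- The chromatic symmetric polynomial of the incomparability graph `inc(P)`,
in the variables `x_0, …, x_{N-1}`. -/
def chromPoly (P : Type*) [Fintype P] [PartialOrder P] (N : ℕ) : MvPolynomial (Fin N) ℤ :=
  ∑ κ ∈ Finset.univ.filter
      (fun κ : P → Fin N => ∀ a b : P, a ≠ b → ¬(a ≤ b ∨ b ≤ a) → κ a ≠ κ b),
    ∏ v, X (κ v)

end

/-!
A cylindric filling is a family of columns, each a chain of `P`, and multiplying out the product of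
elementary symmetric polynomials or the chromatic polynomial gives all families of chains with a
given content, of arbitrary lengths. Consider the linear functional `Φ` that sends the monomial
`∏ c, x_c ^ m_c` to the determinant of the 0-1 matrix telling which columns, if column `c` has
length `m_c`, end where the columns of `λ` end, modulo the period of the cylinder.

Exchanging two tails at a first crossing of a family of chains changes the sign of its
determinant; since `P` is `(3+1)`-free, the new columns are again chains and the first crossing
stays the same. So only families without crossings contribute, and for these the determinant is
1 or 0 according to whether the columns fill the shape `λ/μ/d`. Hence `Φ` sends the chromatic
polynomial of `inc(P)` to the number of standard tableaux. The same statement for a finite chain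
in place of `P` says that `Φ` sends `e_ν` to the coefficient `a_ν` of `m_ν` in the cylindric Schur
function, and the theorem is `Φ` applied to the `e`-expansion of the chromatic polynomial.
-/

namespace ThreePlusOneFree

variable {P : Type*} [PartialOrder P]

theorem lt_or_lt (h31 : ThreePlusOneFree P) {a b c : P} (hab : a < b) (hbc : b < c) (s : P) :
    a < s ∨ s < c := by
  by_contra! h
  obtain ⟨has, hsc⟩ := h
  have hac := hab.trans hbc
  refine h31 ⟨a, b, c, s, hab, hbc, ?_, ?_, ?_⟩ <;> rintro (h | h)
  · exact hsc (h.trans_lt hac)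
  · exact h.lt_or_eq.elim has fun h => hsc (h ▸ hac)
  · exact hsc (h.trans_lt hbc)
  · exact has (hab.trans_le h)
  · exact h.lt_or_eq.elim hsc fun h => has (h ▸ hac)
  · exact has (hac.trans_le h)

theorem of_linearOrder (Q : Type*) [LinearOrder Q] : ThreePlusOneFree Q := by
  rintro ⟨a, _, _, x, _, _, hxa, -⟩
  exact hxa (le_total x a)

theorem withTop (h31 : ThreePlusOneFree P) : ThreePlusOneFree (WithTop P) := by
  rintro ⟨a, b, c, x, hab, hbc, hxa, hxb, hxc⟩
  lift x to P using fun hx => hxa (.inr (hx ▸ le_top))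
  lift c to P using fun hc => hxc (.inl (hc ▸ le_top))
  lift b to P using hbc.ne_top
  lift a to P using hab.ne_top
  simp only [WithTop.coe_le_coe, WithTop.coe_lt_coe] at hab hbc hxa hxb hxc
  exact h31 ⟨a, b, c, x, hab, hbc, hxa, hxb, hxc⟩

end ThreePlusOneFree

section Columns

variable {X : Type*} [PartialOrder X] [OrderTop X]

/-- A column of an array, read from the top: a sequence that strictly increases until it reaches
`⊤`, the value given to all positions below the last cell of the column. -/
def IsColumn (C : ℕ → X) : Prop := ∀ m, C m < C (m + 1) ∨ C m = ⊤ ∧ C (m + 1) = ⊤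

theorem IsColumn.monotone {C : ℕ → X} (hC : IsColumn C) : Monotone C :=
  monotone_nat_of_le_succ fun m => (hC m).elim le_of_lt fun h => (h.1.trans h.2.symm).le

theorem IsColumn.lt {C : ℕ → X} (hC : IsColumn C) {m n : ℕ} (hmn : m < n) (hm : C m ≠ ⊤) :
    C m < C n :=
  ((hC m).resolve_right fun h => hm h.1).trans_le (hC.monotone hmn)

theorem IsColumn.eq_top_of_le {C : ℕ → X} (hC : IsColumn C) {m n : ℕ} (hmn : m ≤ n)
    (hm : C m = ⊤) : C n = ⊤ :=
  top_le_iff.1 (hm ▸ hC.monotone hmn)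

theorem IsColumn.lt_of_ne_top_right {C : ℕ → X} (hC : IsColumn C) {m n : ℕ} (hmn : m < n)
    (hn : C n ≠ ⊤) : C m < C n :=
  hC.lt hmn fun hm => hn (hC.eq_top_of_le hmn.le hm)

end Columns

/-! ### Crossings and tail swaps -/

/-- A place where two columns `i` and `j` of an array may cross: the point in row `r` of column `j`
is compared with the witness in row `w` of column `i`. Rows are counted from the top of each
column. -/
structure Site (ι : Type*) where
  i : ι
  j : ι
  w : ℕ
  r : ℕ

namespace Site

variable {ι R X : Type*}

/-- Exchange the part of column `i` from row `w` on with the part of column `j` below row `r`. -/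
noncomputable def swap (φ : Site ι) (T : ι → ℕ → X) (c : ι) (m : ℕ) : X :=
  if c = φ.i then if m < φ.w then T φ.i m else T φ.j (φ.r + 1 + (m - φ.w))
  else if c = φ.j then if m ≤ φ.r then T φ.j m else T φ.i (φ.w + (m - (φ.r + 1)))
  else T c m

/-- Row `m` of column `c` belongs to one of the two tails exchanged by `φ.swap`. -/
def Moves (φ : Site ι) (c : ι) (m : ℕ) : Prop := c = φ.i ∧ φ.w ≤ m ∨ c = φ.j ∧ φ.r < m

section Swap

variable {φ : Site ι} {T : ι → ℕ → X}

theorem swap_i_of_lt {m : ℕ} (hm : m < φ.w) : φ.swap T φ.i m = T φ.i m := by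
  simp [swap, hm]

theorem swap_i_add (φ : Site ι) (T : ι → ℕ → X) (k : ℕ) :
    φ.swap T φ.i (φ.w + k) = T φ.j (φ.r + 1 + k) := by
  simp [swap]

theorem swap_j_of_le (hij : φ.i ≠ φ.j) {m : ℕ} (hm : m ≤ φ.r) : φ.swap T φ.j m = T φ.j m := by
  simp [swap, hij.symm, hm]

theorem swap_j_add (hij : φ.i ≠ φ.j) (T : ι → ℕ → X) (k : ℕ) :
    φ.swap T φ.j (φ.r + 1 + k) = T φ.i (φ.w + k) := by
  simp [swap, hij.symm, show ¬φ.r + 1 + k ≤ φ.r by lia]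

theorem swap_of_ne {c : ι} (hi : c ≠ φ.i) (hj : c ≠ φ.j) : φ.swap T c = T c := by
  ext m
  simp [swap, hi, hj]

theorem swap_swap (hij : φ.i ≠ φ.j) (T : ι → ℕ → X) : φ.swap (φ.swap T) = T := by
  ext c m
  obtain rfl | hi := eq_or_ne c φ.i
  · obtain hm | ⟨k, rfl⟩ := (lt_or_ge m φ.w).imp_right Nat.exists_eq_add_of_le
    · rw [swap_i_of_lt hm, swap_i_of_lt hm]
    · rw [swap_i_add, swap_j_add hij]
  obtain rfl | hj := eq_or_ne c φ.j
  · obtain hm | ⟨k, rfl⟩ := (lt_or_ge m (φ.r + 1)).imp_right Nat.exists_eq_add_of_le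
    · rw [swap_j_of_le hij (by lia), swap_j_of_le hij (by lia)]
    · rw [swap_j_add hij, swap_i_add]
  · rw [swap_of_ne hi hj, swap_of_ne hi hj]

theorem swap_apply_of_not_moves (hij : φ.i ≠ φ.j) {c : ι} {m : ℕ} (hm : ¬ φ.Moves c m) :
    φ.swap T c m = T c m := by
  simp only [Moves, not_or, not_and, not_le, not_lt] at hm
  obtain rfl | hi := eq_or_ne c φ.i
  · exact swap_i_of_lt (hm.1 rfl)
  obtain rfl | hj := eq_or_ne c φ.j
  · exact swap_j_of_le hij (hm.2 rfl)
  · rw [swap_of_ne hi hj]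

end Swap

section Key

variable [CommRing R] [PartialOrder X] {b : ι → R} {T : ι → ℕ → X} {φ ψ : Site ι}

/-- The columns of the array `T` cross at `φ`, in the sense of `IsIntPoint`. Column `c` starts at
height `b c`; heights live in a ring `R` (integers modulo the period), so that all the translates
of a column in the cylindric array are treated at once, and `w ≤ r` says that the translate of
column `i` in question lies to the left of column `j`. -/
def IsCrossing (b : ι → R) (T : ι → ℕ → X) (φ : Site ι) : Prop :=
  φ.w ≤ φ.r ∧ b φ.i + φ.w = b φ.j + (φ.r + 1) ∧ T φ.j φ.r < T φ.i φ.w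

/-- The order in which crossings are resolved: first by the entry at the crossing point, along a
linear extension, then by its column. -/
noncomputable def key (T : ι → ℕ → X) (φ : Site ι) : LinearExtension X ×ₗ ι :=
  toLex (toLinearExtension (T φ.j φ.r), φ.j)

theorem eq_of_key_eq (h : key T φ = key T ψ) : T φ.j φ.r = T ψ.j ψ.r ∧ φ.j = ψ.j :=
  Prod.ext_iff.1 (toLex.injective h)

theorem key_congr {T' : ι → ℕ → X} (h : T' φ.j φ.r = T φ.j φ.r) : key T' φ = key T φ := by
  rw [key, key, h]

variable [LinearOrder ι]

theorem key_lt_key_of_lt (h : T φ.j φ.r < T ψ.j ψ.r) : key T φ < key T ψ :=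
  Prod.Lex.left _ _ (toLinearExtension.monotone h.le |>.lt_of_ne fun e => h.ne e)

theorem not_lt_of_key_le (h : key T φ ≤ key T ψ) : ¬ T ψ.j ψ.r < T φ.j φ.r :=
  fun hlt => h.not_gt (key_lt_key_of_lt hlt)

/-- `φ` is a first crossing of the array `T`. -/
def IsMinCrossing (b : ι → R) (T : ι → ℕ → X) : Site ι → Prop :=
  MinimalFor (IsCrossing b T) (key T)

theorem IsMinCrossing.key_le (h : IsMinCrossing b T φ) (hψ : IsCrossing b T ψ) :
    key T φ ≤ key T ψ :=
  (le_total _ _).elim id (h.2 hψ)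

theorem exists_isMinCrossing [Finite X] [Finite ι] (h : ∃ φ, IsCrossing b T φ) :
    ∃ φ, IsMinCrossing b T φ :=
  have : Finite (LinearExtension X ×ₗ ι) := inferInstanceAs (Finite (X × ι))
  exists_minimalFor_of_wellFoundedLT _ _ h

end Key

section Crossing

variable [CommRing R] [PartialOrder X] [OrderTop X] {b : ι → R} {T : ι → ℕ → X} {φ ψ : Site ι}

theorem IsCrossing.ne_top (h : IsCrossing b T φ) : T φ.j φ.r ≠ ⊤ := h.2.2.ne_top

theorem IsCrossing.ne (hT : ∀ c, IsColumn (T c)) (h : IsCrossing b T φ) : φ.i ≠ φ.j := by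
  obtain ⟨hwr, -, hlt⟩ := h
  intro hij
  rw [hij] at hlt
  exact hlt.not_ge ((hT φ.j).monotone hwr)

theorem IsCrossing.lt_swap_apply (hT : ∀ c, IsColumn (T c)) (h : IsCrossing b T φ) {c : ι}
    {m : ℕ} (hm : φ.Moves c m) : T φ.j φ.r < φ.swap T c m := by
  obtain ⟨rfl, hm⟩ | ⟨rfl, hm⟩ := hm
  · obtain ⟨k, rfl⟩ := Nat.exists_eq_add_of_le hm
    rw [swap_i_add]
    exact (hT _).lt (by lia) h.ne_top
  · obtain ⟨k, rfl⟩ := Nat.exists_eq_add_of_le hm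
    rw [Nat.succ_eq_add_one, swap_j_add (h.ne hT)]
    exact h.2.2.trans_le ((hT _).monotone (by lia))

theorem IsCrossing.key_swap (hT : ∀ c, IsColumn (T c)) (h : IsCrossing b T φ) :
    key (φ.swap T) φ = key T φ :=
  key_congr (swap_j_of_le (h.ne hT) le_rfl)

/-- No translate of a column passes between the witness and the point of the site. -/
def IsAdjacent (b : ι → R) (φ : Site ι) : Prop :=
  ∀ k u, φ.w < u → u ≤ φ.r → b k + u ≠ b φ.j + (φ.r + 1)

theorem not_isCrossing_of_isAdjacent (h31 : ThreePlusOneFree X) (hT : ∀ c, IsColumn (T c))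
    (h : ∀ φ, IsAdjacent b φ → ¬ IsCrossing b T φ) (φ : Site ι) : ¬ IsCrossing b T φ := by
  induction hn : φ.r - φ.w using Nat.strong_induction_on generalizing φ with
  | _ n ih =>
    by_cases hadj : IsAdjacent b φ
    · exact h φ hadj
    rintro ⟨hwr, hpos, hlt⟩
    simp only [IsAdjacent, not_forall, not_not] at hadj
    obtain ⟨k, u, hwu, hur, hk⟩ := hadj
    obtain ⟨u, rfl⟩ := Nat.exists_eq_add_one_of_ne_zero (Nat.ne_zero_of_lt hwu)
    obtain ⟨r, hr⟩ := Nat.exists_eq_add_one_of_ne_zero (Nat.ne_zero_of_lt hur)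
    rw [hr] at hk hpos
    push_cast at hk hpos
    have hleft : ¬ T k u < T φ.i φ.w := fun hlt' =>
      ih _ (by simp only; lia) ⟨φ.i, k, φ.w, u⟩ rfl
        ⟨by lia, by linear_combination hpos - hk, hlt'⟩
    have hright : ¬ T φ.j r < T k u := fun hlt' =>
      ih _ (by simp only; lia) ⟨k, φ.j, u, r⟩ rfl ⟨by lia, by linear_combination hk, hlt'⟩
    have hrr : T φ.j r < T φ.j φ.r := (hT φ.j).lt_of_ne_top_right (by lia) hlt.ne_top
    exact (h31.lt_or_lt hrr hlt (T k u)).elim hright hleft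

variable [LinearOrder ι]

/-- Moving one row up from a first crossing leads to a smaller entry, hence not to a crossing. -/
theorem IsMinCrossing.not_lt_pred (hT : ∀ c, IsColumn (T c)) (h : IsMinCrossing b T φ) {w r : ℕ}
    (hw : φ.w = w + 1) (hr : φ.r = r + 1) : ¬ T φ.j r < T φ.i w := by
  obtain ⟨hwr, hpos, hlt⟩ := h.1
  intro hlt'
  have hcross : IsCrossing b T ⟨φ.i, φ.j, w, r⟩ := by
    refine ⟨by lia, ?_, hlt'⟩
    rw [hw, hr] at hpos
    push_cast at hpos
    linear_combination hpos
  have hrr : T φ.j r < T φ.j φ.r := (hT φ.j).lt (by lia) hlt'.ne_top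
  exact (h.key_le hcross).not_gt (key_lt_key_of_lt hrr)

theorem IsMinCrossing.apply_ne_top (hT : ∀ c, IsColumn (T c)) (h : IsMinCrossing b T φ) {m : ℕ}
    (hm : m < φ.w) : T φ.i m ≠ ⊤ := by
  obtain ⟨w, hw⟩ := Nat.exists_eq_add_one_of_ne_zero (Nat.ne_zero_of_lt hm)
  obtain ⟨r, hr⟩ := Nat.exists_eq_add_one_of_ne_zero (Nat.ne_zero_of_lt (hm.trans_le h.1.1))
  have hrr : T φ.j r < T φ.j φ.r := (hT φ.j).lt_of_ne_top_right (by lia) h.1.ne_top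
  intro htop
  have htop' : T φ.i w = ⊤ := (hT φ.i).eq_top_of_le (by lia) htop
  exact h.not_lt_pred hT hw hr (htop' ▸ hrr.lt_top)

/-- The new neighbours in column `i` are in order by `(3+1)`-freeness, applied to rows `r - 1`, `r`,
`r + 1` of column `j` and row `w - 1` of column `i`. -/
theorem IsMinCrossing.isColumn_swap (h31 : ThreePlusOneFree X) (hT : ∀ c, IsColumn (T c))
    (h : IsMinCrossing b T φ) (c : ι) : IsColumn (φ.swap T c) := by
  have hij := h.1.ne hT
  have hlt := h.1.2.2
  have hwr := h.1.1
  intro m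
  obtain rfl | hi := eq_or_ne c φ.i
  · obtain hm | hm | ⟨k, rfl⟩ : m + 1 < φ.w ∨ φ.w = m + 1 ∨ ∃ k, m = φ.w + k := by
      obtain hm | hm := lt_or_ge m φ.w
      · lia
      · exact .inr (.inr (Nat.exists_eq_add_of_le hm))
    · rw [swap_i_of_lt (by lia), swap_i_of_lt hm]
      exact hT _ m
    · obtain ⟨r, hr⟩ := Nat.exists_eq_add_one_of_ne_zero (n := φ.r) (by lia)
      have h1 : T φ.j r < T φ.j φ.r := (hT _).lt_of_ne_top_right (by lia) h.1.ne_top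
      have h2 : T φ.j φ.r < T φ.j (φ.r + 1) := (hT _).lt (by lia) h.1.ne_top
      rw [swap_i_of_lt (by lia), ← hm, ← add_zero φ.w, swap_i_add]
      exact .inl ((h31.lt_or_lt h1 h2 _).resolve_left (h.not_lt_pred hT hm hr))
    · rw [add_assoc, swap_i_add, swap_i_add]
      exact hT _ _
  obtain rfl | hj := eq_or_ne c φ.j
  · obtain hm | rfl | ⟨k, rfl⟩ : m < φ.r ∨ m = φ.r ∨ ∃ k, m = φ.r + 1 + k := by
      obtain hm | hm := lt_or_ge φ.r m
      · exact .inr (.inr (Nat.exists_eq_add_of_le hm))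
      · lia
    · rw [swap_j_of_le hij (by lia), swap_j_of_le hij (by lia)]
      exact hT _ m
    · rw [swap_j_of_le hij le_rfl, ← add_zero (φ.r + 1), swap_j_add hij]
      exact .inl hlt
    · rw [add_assoc _ k, swap_j_add hij, swap_j_add hij]
      exact hT _ _
  · rw [swap_of_ne hi hj]
    exact hT c m

theorem IsMinCrossing.eq_of_key_le (hT : ∀ c, IsColumn (T c)) (h : IsMinCrossing b T φ)
    (hψ : IsCrossing b T ψ) (hle : key T ψ ≤ key T φ) : ψ.j = φ.j ∧ ψ.r = φ.r := by
  obtain ⟨heq, hj⟩ := eq_of_key_eq (hle.antisymm (h.key_le hψ))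
  refine ⟨hj, ?_⟩
  rw [hj] at heq
  by_contra! hne
  obtain hlt | hlt := hne.lt_or_gt
  · exact ((hT φ.j).lt hlt (heq ▸ h.1.ne_top)).ne heq
  · exact ((hT φ.j).lt hlt h.1.ne_top).ne' heq

theorem IsCrossing.not_moves_of_key_le (hT : ∀ c, IsColumn (T c)) (h : IsCrossing b T φ)
    (hψ : key (φ.swap T) ψ ≤ key (φ.swap T) φ) : ¬ φ.Moves ψ.j ψ.r := by
  intro hs
  refine not_lt_of_key_le hψ ?_
  rw [swap_j_of_le (h.ne hT) le_rfl]
  exact h.lt_swap_apply hT hs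

theorem IsCrossing.key_swap_of_key_le (hT : ∀ c, IsColumn (T c)) (h : IsCrossing b T φ)
    (hψ : key (φ.swap T) ψ ≤ key (φ.swap T) φ) : key (φ.swap T) ψ = key T ψ :=
  key_congr (swap_apply_of_not_moves (h.ne hT) (h.not_moves_of_key_le hT hψ))

theorem IsMinCrossing.lt_witness (h31 : ThreePlusOneFree X) (hb : Function.Injective b)
    (hT : ∀ c, IsColumn (T c)) (h : IsMinCrossing b T φ) {q : ι} {s : ℕ}
    (hpos : b φ.i + φ.w = b q + (s + 1)) (hs : s ≤ φ.r) : T q s < T φ.i φ.w := by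
  obtain ⟨-, hposφ, hlt⟩ := h.1
  obtain rfl | hsr := hs.eq_or_lt
  · obtain rfl : q = φ.j := hb (by linear_combination hposφ - hpos)
    exact hlt
  obtain ⟨r, hr⟩ := Nat.exists_eq_add_one_of_ne_zero (Nat.ne_zero_of_lt hsr)
  have hrr : T φ.j r < T φ.j φ.r := (hT φ.j).lt_of_ne_top_right (by lia) h.1.ne_top
  refine (h31.lt_or_lt hrr hlt _).resolve_left fun hrs => ?_
  have hcross : IsCrossing b T ⟨q, φ.j, s, r⟩ := by
    refine ⟨by lia, ?_, hrs⟩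
    rw [hr] at hposφ
    push_cast at hposφ
    linear_combination hposφ - hpos
  exact (h.key_le hcross).not_gt (key_lt_key_of_lt hrr)

theorem IsMinCrossing.lt_of_witness_tail (h31 : ThreePlusOneFree X) (hb : Function.Injective b)
    (hT : ∀ c, IsColumn (T c)) (h : IsMinCrossing b T φ) {k : ℕ} (hi : ψ.i = φ.i)
    (hw : ψ.w = φ.w + k) (hpos : b ψ.i + ψ.w = b ψ.j + (ψ.r + 1)) (hle : key T ψ ≤ key T φ)
    (hlt : T ψ.j ψ.r < T φ.j (φ.r + 1 + k)) : T ψ.j ψ.r < T φ.i (φ.w + k) := by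
  have hwr := h.1.1
  rw [hi, hw] at hpos
  push_cast at hpos
  have hs : ψ.r ≤ φ.r + k := by
    by_contra! hs
    have hcross : IsCrossing b T ⟨φ.j, ψ.j, φ.r + 1 + k, ψ.r⟩ := by
      refine ⟨by lia, ?_, hlt⟩
      push_cast
      linear_combination hpos - h.1.2.1
    have := (h.eq_of_key_le hT hcross hle).2
    lia
  obtain rfl | hk := k.eq_zero_or_pos
  · exact h.lt_witness h31 hb hT (by simpa using hpos) hs
  by_cases htop : T φ.i φ.w = ⊤
  · rw [(hT φ.i).eq_top_of_le (Nat.le_add_right φ.w k) htop]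
    exact hlt.lt_top
  · exact (h31.lt_or_lt h.1.2.2 ((hT φ.i).lt (by lia) htop) _).resolve_left (not_lt_of_key_le hle)

theorem IsMinCrossing.not_lt_of_witness_tail (hT : ∀ c, IsColumn (T c)) (h : IsMinCrossing b T φ)
    {k : ℕ} (hj : ψ.i = φ.j) (hw : ψ.w = φ.r + 1 + k) (hwr : ψ.w ≤ ψ.r)
    (hpos : b ψ.i + ψ.w = b ψ.j + (ψ.r + 1)) (hle : key T ψ ≤ key T φ) :
    ¬ T ψ.j ψ.r < T φ.i (φ.w + k) := by
  intro hlt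
  have hcross : IsCrossing b T ⟨φ.i, ψ.j, φ.w + k, ψ.r⟩ := by
    refine ⟨by have := h.1.1; lia, ?_, hlt⟩
    rw [hj, hw] at hpos
    push_cast at hpos ⊢
    linear_combination hpos + h.1.2.1
  have := (h.eq_of_key_le hT hcross hle).2
  lia

theorem IsMinCrossing.isCrossing_of_swap (h31 : ThreePlusOneFree X) (hb : Function.Injective b)
    (hT : ∀ c, IsColumn (T c)) (h : IsMinCrossing b T φ) (hψ : IsCrossing b (φ.swap T) ψ)
    (hle : key (φ.swap T) ψ ≤ key (φ.swap T) φ) : IsCrossing b T ψ := by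
  obtain ⟨hwr, hpos, hlt⟩ := hψ
  have hij := h.1.ne hT
  have hle' : key T ψ ≤ key T φ := by
    rwa [← h.1.key_swap_of_key_le hT hle, ← h.1.key_swap hT]
  rw [swap_apply_of_not_moves hij (h.1.not_moves_of_key_le hT hle)] at hlt
  refine ⟨hwr, hpos, ?_⟩
  by_cases hm : φ.Moves ψ.i ψ.w
  · obtain ⟨hi, hw⟩ | ⟨hj, hw⟩ := hm
    · obtain ⟨k, hk⟩ := Nat.exists_eq_add_of_le hw
      rw [hi, hk, swap_i_add] at hlt
      rw [hi, hk]
      exact h.lt_of_witness_tail h31 hb hT hi hk hpos hle' hlt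
    · obtain ⟨k, hk⟩ := Nat.exists_eq_add_of_le hw
      rw [hj, hk, Nat.succ_eq_add_one, swap_j_add hij] at hlt
      exact absurd hlt (h.not_lt_of_witness_tail hT hj hk hwr hpos hle')
  · rwa [swap_apply_of_not_moves hij hm] at hlt

theorem IsMinCrossing.swap (h31 : ThreePlusOneFree X) (hb : Function.Injective b)
    (hT : ∀ c, IsColumn (T c)) (h : IsMinCrossing b T φ) : IsMinCrossing b (φ.swap T) φ := by
  refine ⟨⟨h.1.1, h.1.2.1, ?_⟩, fun ψ hψ hle => ?_⟩
  · rw [swap_j_of_le (h.1.ne hT) le_rfl, ← add_zero φ.w, swap_i_add]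
    exact (hT _).lt (by lia) h.1.ne_top
  · rw [h.1.key_swap hT, h.1.key_swap_of_key_le hT hle]
    exact h.key_le (h.isCrossing_of_swap h31 hb hT hψ hle)

theorem IsMinCrossing.of_swap (h31 : ThreePlusOneFree X) (hb : Function.Injective b)
    (hT : ∀ c, IsColumn (T c)) (h : IsMinCrossing b T φ) (hψ : IsMinCrossing b (φ.swap T) ψ) :
    IsMinCrossing b T ψ := by
  have hle := hψ.key_le (h.swap h31 hb hT).1
  refine ⟨h.isCrossing_of_swap h31 hb hT hψ.1 hle, fun χ hχ _ => ?_⟩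
  rw [← h.1.key_swap_of_key_le hT hle]
  exact hle.trans ((h.1.key_swap hT).trans_le (h.key_le hχ))

theorem IsMinCrossing.swap_iff (h31 : ThreePlusOneFree X) (hb : Function.Injective b)
    (hT : ∀ c, IsColumn (T c)) (h : IsMinCrossing b T φ) :
    IsMinCrossing b (φ.swap T) ψ ↔ IsMinCrossing b T ψ := by
  refine ⟨h.of_swap h31 hb hT, fun hψ => ?_⟩
  refine (h.swap h31 hb hT).of_swap h31 hb (h.isColumn_swap h31 hT) ?_
  rwa [swap_swap (h.1.ne hT)]

end Crossing

end Site

/-! ### Arrays of chains -/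

section ColumnEntry

variable {P : Type*}

/-- The column with the entries of `L`, padded by `⊤`. -/
def columnEntry (L : List P) (m : ℕ) : WithTop P := L[m]?.elim ⊤ (↑)

theorem columnEntry_of_lt {L : List P} {m : ℕ} (hm : m < L.length) :
    columnEntry L m = (L[m] : P) := by
  simp [columnEntry, hm]

theorem columnEntry_eq_top_iff {L : List P} {m : ℕ} : columnEntry L m = ⊤ ↔ L.length ≤ m := by
  obtain hm | hm := lt_or_ge m L.length
  · simp [columnEntry_of_lt hm, hm]
  · simp [columnEntry, hm]

theorem columnEntry_injective : Function.Injective (columnEntry (P := P)) := by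
  intro L M h
  have hlen : L.length = M.length := eq_of_forall_ge_iff fun m => by
    rw [← columnEntry_eq_top_iff (L := L), ← columnEntry_eq_top_iff (L := M), h]
  refine List.ext_getElem hlen fun m hL hM => ?_
  have hm := congrFun h m
  rwa [columnEntry_of_lt hL, columnEntry_of_lt hM, WithTop.coe_inj] at hm

theorem columnEntry_take_append_drop {L M : List P} {w v : ℕ} (hw : w ≤ L.length) (m : ℕ) :
    columnEntry (L.take w ++ M.drop v) m =
      if m < w then columnEntry L m else columnEntry M (v + (m - w)) := by
  split_ifs with hm
  · simp [columnEntry, List.getElem?_append_left, hm, hm.trans_le hw]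
  · rw [columnEntry, List.getElem?_append_right (by simp; lia)]
    simp [columnEntry, hw]

theorem isColumn_columnEntry_iff [PartialOrder P] {L : List P} :
    IsColumn (columnEntry L) ↔ L.SortedLT := by
  rw [List.sortedLT_iff_isChain, List.isChain_iff_getElem]
  refine ⟨fun h m hm => ?_, fun h m => ?_⟩
  · have hlt := (h m).resolve_right fun htop => (columnEntry_eq_top_iff.1 htop.2).not_gt hm
    rwa [columnEntry_of_lt hm, columnEntry_of_lt (by lia), WithTop.coe_lt_coe] at hlt
  · obtain hm | hm := lt_or_ge (m + 1) L.length
    · rw [columnEntry_of_lt hm, columnEntry_of_lt (by lia), WithTop.coe_lt_coe]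
      exact .inl (h m hm)
    · rw [columnEntry_eq_top_iff.2 hm, columnEntry_eq_top_iff, lt_top_iff_ne_top, Ne,
        columnEntry_eq_top_iff]
      lia

end ColumnEntry

/-- The entries of the array with columns `L c`. -/
def entries {ι P : Type*} (L : ι → List P) (c : ι) : ℕ → WithTop P := columnEntry (L c)

namespace Site

variable {ι P : Type*} {φ : Site ι} {L : ι → List P}

/-- `Site.swap` on arrays given by the lists of entries of their columns. -/
noncomputable def swapLists (φ : Site ι) (L : ι → List P) (c : ι) : List P :=
  if c = φ.i then (L φ.i).take φ.w ++ (L φ.j).drop (φ.r + 1)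
  else if c = φ.j then (L φ.j).take (φ.r + 1) ++ (L φ.i).drop φ.w
  else L c

theorem entries_swapLists (hw : φ.w ≤ (L φ.i).length) (hr : φ.r < (L φ.j).length) :
    entries (φ.swapLists L) = φ.swap (entries L) := by
  ext c m
  by_cases hi : c = φ.i
  · simp only [entries, swapLists, swap, hi, if_true, columnEntry_take_append_drop hw]
  by_cases hj : c = φ.j
  · simp only [entries, swapLists, swap, hj ▸ hi, hj, if_true, if_false,
      columnEntry_take_append_drop (Nat.succ_le_iff.2 hr), Nat.lt_succ_iff]
  · simp only [entries, swapLists, swap, hi, hj, if_false]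

theorem length_swapLists [DecidableEq ι] {R : Type*} [CommRing R] {b : ι → R} (hij : φ.i ≠ φ.j)
    (hw : φ.w ≤ (L φ.i).length) (hr : φ.r < (L φ.j).length)
    (hpos : b φ.i + φ.w = b φ.j + (φ.r + 1)) (c : ι) :
    b c + (φ.swapLists L c).length =
      b (Equiv.swap φ.i φ.j c) + (L (Equiv.swap φ.i φ.j c)).length := by
  have hcastw : ((L φ.i).length : R) = φ.w + ((L φ.i).length - φ.w : ℕ) := by
    rw [← Nat.cast_add, Nat.add_sub_cancel' hw]
  have hcastr : ((L φ.j).length : R) = φ.r + 1 + ((L φ.j).length - (φ.r + 1) : ℕ) := by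
    rw [← Nat.cast_succ, ← Nat.cast_add, Nat.succ_eq_add_one, Nat.add_sub_cancel' hr]
  by_cases hi : c = φ.i
  · simp only [hi, swapLists, if_true, Equiv.swap_apply_left, List.length_append,
      List.length_take_of_le hw, List.length_drop]
    rw [hcastr]
    push_cast
    linear_combination hpos
  by_cases hj : c = φ.j
  · simp only [hj, hij.symm, swapLists, if_true, if_false, Equiv.swap_apply_right,
      List.length_append, List.length_take_of_le (Nat.succ_le_iff.2 hr), List.length_drop]
    rw [hcastw]
    push_cast
    linear_combination -hpos
  · simp only [swapLists, hi, hj, if_false, Equiv.swap_apply_of_ne_of_ne hi hj]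

theorem sum_count_swapLists [Fintype ι] (hij : φ.i ≠ φ.j) (L : ι → List P) (x : P) :
    ∑ c, (φ.swapLists L c).count x = ∑ c, (L c).count x := by
  have hsum (f : ι → ℕ) :
      ∑ c, f c = f φ.i + (f φ.j + ∑ c ∈ (Finset.univ.erase φ.i).erase φ.j, f c) := by
    rw [Finset.add_sum_erase _ _ (Finset.mem_erase.2 ⟨hij.symm, Finset.mem_univ _⟩),
      Finset.add_sum_erase _ _ (Finset.mem_univ _)]
  have hrest : ∑ c ∈ (Finset.univ.erase φ.i).erase φ.j, (φ.swapLists L c).count x =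
      ∑ c ∈ (Finset.univ.erase φ.i).erase φ.j, (L c).count x :=
    Finset.sum_congr rfl fun c hc => by
      simp only [Finset.mem_erase] at hc
      simp only [swapLists, hc.1, hc.2.1, if_false]
  have hcount (M : List P) (k : ℕ) : (M.take k).count x + (M.drop k).count x = M.count x := by
    rw [← List.count_append, List.take_append_drop]
  rw [hsum, hsum, hrest, ← hcount (L φ.i) φ.w, ← hcount (L φ.j) (φ.r + 1)]
  simp only [swapLists, hij.symm, if_true, if_false, List.count_append]
  ring

end Site

section EndMatrix

variable {ι R : Type*} [Fintype ι] [DecidableEq ι]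

/-- The 0-1 matrix whose determinant is the signed count of the matchings of the ends `e` of the
columns of an array with the prescribed ends `a`. -/
noncomputable def endMatrix (a e : ι → R) : Matrix ι ι ℤ :=
  Matrix.of fun r c => if e c = a r then 1 else 0

theorem det_endMatrix_self {a : ι → R} (ha : Function.Injective a) : (endMatrix a a).det = 1 := by
  rw [← Matrix.det_one (n := ι)]
  congr 1
  ext r c
  simp [endMatrix, Matrix.one_apply, ha.eq_iff, eq_comm]

theorem det_endMatrix_comp (a e : ι → R) (σ : Equiv.Perm ι) :
    (endMatrix a (e ∘ σ)).det = Equiv.Perm.sign σ * (endMatrix a e).det :=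
  Matrix.det_permute' σ (endMatrix a e)

theorem exists_perm_of_det_endMatrix_ne_zero {a e : ι → R} (h : (endMatrix a e).det ≠ 0) :
    ∃ π : Equiv.Perm ι, ∀ c, e c = a (π c) := by
  rw [Matrix.det_apply] at h
  obtain ⟨π, -, hπ⟩ := Finset.exists_ne_zero_of_sum_ne_zero h
  refine ⟨π, fun c => ?_⟩
  by_contra hc
  exact hπ (by rw [Finset.prod_eq_zero (Finset.mem_univ c) (by simp [endMatrix, hc]), smul_zero])

end EndMatrix

section Noncrossing

variable {ι P R : Type*} [PartialOrder P] [CommRing R]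

/-- No two columns of the array `L` cross, nor do their translates. -/
def IsNoncrossing (b : ι → R) (L : ι → List P) : Prop := ∀ φ : Site ι, ¬ φ.IsCrossing b (entries L)

/-- The heights at which the columns of the array `L` end. -/
def columnEnd (b : ι → R) (L : ι → List P) (c : ι) : R := b c + (L c).length

variable {b : ι → R} {L : ι → List P}

theorem isColumn_entries_iff : (∀ c, IsColumn (entries L c)) ↔ ∀ c, (L c).SortedLT :=
  forall_congr' fun _ => isColumn_columnEntry_iff

variable [LinearOrder ι]

namespace Site.IsMinCrossing

variable {φ : Site ι}

theorem le_length (hL : ∀ c, (L c).SortedLT) (h : φ.IsMinCrossing b (entries L)) :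
    φ.w ≤ (L φ.i).length := by
  by_contra! hlt
  exact h.apply_ne_top (isColumn_entries_iff.2 hL) hlt (columnEntry_eq_top_iff.2 le_rfl)

theorem lt_length (h : φ.IsMinCrossing b (entries L)) : φ.r < (L φ.j).length :=
  lt_of_not_ge fun hle => h.1.ne_top (columnEntry_eq_top_iff.2 hle)

theorem entries_swapLists (hL : ∀ c, (L c).SortedLT) (h : φ.IsMinCrossing b (entries L)) :
    entries (φ.swapLists L) = φ.swap (entries L) :=
  φ.entries_swapLists (h.le_length hL) h.lt_length

theorem swapLists_iff (h31 : ThreePlusOneFree P) (hb : Function.Injective b)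
    (hL : ∀ c, (L c).SortedLT) (h : φ.IsMinCrossing b (entries L)) (ψ : Site ι) :
    ψ.IsMinCrossing b (entries (φ.swapLists L)) ↔ ψ.IsMinCrossing b (entries L) := by
  rw [h.entries_swapLists hL, h.swap_iff h31.withTop hb (isColumn_entries_iff.2 hL)]

theorem sortedLT_swapLists (h31 : ThreePlusOneFree P) (hL : ∀ c, (L c).SortedLT)
    (h : φ.IsMinCrossing b (entries L)) (c : ι) : (φ.swapLists L c).SortedLT := by
  revert c
  rw [← isColumn_entries_iff, h.entries_swapLists hL]
  exact h.isColumn_swap h31.withTop (isColumn_entries_iff.2 hL)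

theorem swapLists_swapLists (h31 : ThreePlusOneFree P) (hb : Function.Injective b)
    (hL : ∀ c, (L c).SortedLT) (h : φ.IsMinCrossing b (entries L)) :
    φ.swapLists (φ.swapLists L) = L := by
  have h' := (h.swapLists_iff h31 hb hL φ).2 h
  have hentries : entries (φ.swapLists (φ.swapLists L)) = entries L := by
    rw [h'.entries_swapLists (h.sortedLT_swapLists h31 hL), h.entries_swapLists hL,
      swap_swap (h.1.ne (isColumn_entries_iff.2 hL))]
  exact funext fun c => columnEntry_injective (congrFun hentries c)

theorem det_endMatrix_swapLists [Fintype ι] (hL : ∀ c, (L c).SortedLT)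
    (h : φ.IsMinCrossing b (entries L)) (a : ι → R) :
    (endMatrix a (columnEnd b (φ.swapLists L))).det = -(endMatrix a (columnEnd b L)).det := by
  have hij := h.1.ne (isColumn_entries_iff.2 hL)
  have hend : columnEnd b (φ.swapLists L) = columnEnd b L ∘ Equiv.swap φ.i φ.j :=
    funext (length_swapLists hij (h.le_length hL) h.lt_length h.1.2.1)
  rw [hend, det_endMatrix_comp, Equiv.Perm.sign_swap hij, Units.val_neg, Units.val_one,
    neg_one_mul]

end Site.IsMinCrossing

theorem not_isNoncrossing_iff [Finite P] [Finite ι] :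
    ¬ IsNoncrossing b L ↔ ∃ φ : Site ι, φ.IsMinCrossing b (entries L) := by
  rw [IsNoncrossing, not_forall_not]
  exact ⟨Site.exists_isMinCrossing, fun ⟨φ, hφ⟩ => ⟨φ, hφ.1⟩⟩

/-- A first crossing, chosen to depend only on the set of all first crossings. -/
noncomputable def firstCrossing [Finite P] [Finite ι] (h : ¬ IsNoncrossing b L) : Site ι :=
  (not_isNoncrossing_iff.1 h).choose

theorem isMinCrossing_firstCrossing [Finite P] [Finite ι] (h : ¬ IsNoncrossing b L) :
    (firstCrossing h).IsMinCrossing b (entries L) :=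
  (not_isNoncrossing_iff.1 h).choose_spec

theorem firstCrossing_congr [Finite P] [Finite ι] {L' : ι → List P} (h : ¬ IsNoncrossing b L)
    (h' : ¬ IsNoncrossing b L')
    (hiff : ∀ φ : Site ι, φ.IsMinCrossing b (entries L) ↔ φ.IsMinCrossing b (entries L')) :
    firstCrossing h = firstCrossing h' := by
  unfold firstCrossing
  congr 1
  exact funext fun φ => propext (hiff φ)

end Noncrossing

section ChainArrays

variable {ι P R : Type*} [Fintype ι] [Finite P] [PartialOrder P]

theorem finite_setOf_chainArray (ι : Type*) [Fintype ι] (f : P → ℕ) :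
    {L : ι → List P | (∀ c, (L c).SortedLT) ∧ ∀ x, ∑ c, (L c).count x = f x}.Finite :=
  have hchains : {L : List P | L.SortedLT}.Finite :=
    have := Fintype.ofFinite P
    (Set.finite_coe_iff.1 (inferInstanceAs (Finite {L : List P // L.Nodup}))).subset
      fun _ hL => hL.nodup
  (Set.Finite.pi' fun _ => hchains).subset fun _ hL => hL.1

/-- The arrays with columns indexed by `ι`, each column a chain of `P` of arbitrary length, in
which `x` occurs `f x` times. -/
noncomputable def chainArrays (ι : Type*) [Fintype ι] (f : P → ℕ) : Finset (ι → List P) :=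
  (finite_setOf_chainArray ι f).toFinset

theorem mem_chainArrays {f : P → ℕ} {L : ι → List P} :
    L ∈ chainArrays ι f ↔ (∀ c, (L c).SortedLT) ∧ ∀ x, ∑ c, (L c).count x = f x :=
  Set.Finite.mem_toFinset _

theorem sum_det_endMatrix_eq_sum_isNoncrossing [LinearOrder ι] [CommRing R] {b : ι → R}
    (h31 : ThreePlusOneFree P) (hb : Function.Injective b) (a : ι → R) (f : P → ℕ) :
    ∑ L ∈ chainArrays ι f, (endMatrix a (columnEnd b L)).det =
      ∑ L ∈ chainArrays ι f with IsNoncrossing b L, (endMatrix a (columnEnd b L)).det := by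
  rw [← Finset.sum_filter_add_sum_filter_not _ (IsNoncrossing b), add_eq_left]
  have hmem {L : ι → List P} (hL : L ∈ (chainArrays ι f).filter (¬ IsNoncrossing b ·)) :
      (∀ c, (L c).SortedLT) ∧ (∀ x, ∑ c, (L c).count x = f x) ∧ ¬ IsNoncrossing b L := by
    rwa [Finset.mem_filter, mem_chainArrays, and_assoc] at hL
  have hcancel {L : ι → List P} (hL : L ∈ (chainArrays ι f).filter (¬ IsNoncrossing b ·)) :=
    (isMinCrossing_firstCrossing (hmem hL).2.2).det_endMatrix_swapLists (hmem hL).1 a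
  refine Finset.sum_involution (fun L hL => (firstCrossing (hmem hL).2.2).swapLists L)
    (fun L hL => ?_) (fun L hL hne heq => ?_) (fun L hL => ?_) (fun L hL => ?_)
  · rw [hcancel hL, add_neg_cancel]
  · have := hcancel hL
    rw [heq] at this
    exact hne (self_eq_neg.1 this)
  all_goals
    obtain ⟨hsort, hcount, hcross⟩ := hmem hL
    have hφ := isMinCrossing_firstCrossing hcross
    have hij := hφ.1.ne (isColumn_entries_iff.2 hsort)
  · rw [Finset.mem_filter, mem_chainArrays]
    exact ⟨⟨hφ.sortedLT_swapLists h31 hsort,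
      fun x => (Site.sum_count_swapLists hij L x).trans (hcount x)⟩,
      not_isNoncrossing_iff.2 ⟨_, (hφ.swapLists_iff h31 hb hsort _).2 hφ⟩⟩
  · rw [firstCrossing_congr _ hcross (hφ.swapLists_iff h31 hb hsort)]
    exact hφ.swapLists_swapLists h31 hb hsort

end ChainArrays

/-! ### Cyclically decreasing heights -/

theorem Site.IsAdjacent.le_of_lt {ι : Type*} {D : ℕ} {b : ι → ℤ} {φ : Site ι}
    (hadj : φ.IsAdjacent fun c => (b c : ZMod D)) {m : ℤ}
    (hpos : b φ.j + (φ.r + 1) = b φ.i + φ.w + D * m) {k : ι} {n : ℤ}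
    (hlt : b k + D * n < b φ.i) : b k + D * (n + m) ≤ b φ.j := by
  by_contra! hgt
  rw [mul_add] at hgt
  obtain ⟨u, hu⟩ := Int.eq_ofNat_of_zero_le (a := b φ.i + φ.w - (b k + D * n)) (by lia)
  refine hadj k u (by lia) (by lia) ?_
  have hcast : ((b k + u + D * (n + m) : ℤ) : ZMod D) = (b φ.j + (φ.r + 1) : ℤ) :=
    congrArg _ (by rw [mul_add]; lia)
  push_cast at hcast
  rwa [ZMod.natCast_self, zero_mul, add_zero] at hcast

theorem eq_zero_of_sum_eq_zero_of_le_add_one {ι : Type*} [Fintype ι] {k : ι → ℤ}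
    (hk : ∀ c c', k c ≤ k c' + 1) (hsum : ∑ c, k c = 0) (c : ι) : k c = 0 := by
  obtain hc | hc | hc := lt_trichotomy (k c) 0
  · exact absurd hsum (Finset.sum_neg' (fun c' _ => by have := hk c' c; lia)
      ⟨c, Finset.mem_univ c, hc⟩).ne
  · exact hc
  · exact absurd hsum.symm (Finset.sum_pos' (fun c' _ => by have := hk c c'; lia)
      ⟨c, Finset.mem_univ c, hc⟩).ne

/-- Heights for the columns `0, …, l - 1` of an array which strictly decrease also when the array
is continued periodically, every `l` columns being the previous `l` columns lowered by `D`. -/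
structure IsCyclicallyDecreasing {l : ℕ} (D : ℕ) (b : Fin l → ℤ) : Prop where
  strictAnti : StrictAnti b
  lt_add (i j : Fin l) : b i < b j + D

namespace IsCyclicallyDecreasing

variable {l D : ℕ} {a b e : Fin l → ℤ}

theorem injective_intCast (hb : IsCyclicallyDecreasing D b) :
    Function.Injective fun c => (b c : ZMod D) := by
  intro i j hij
  have hdvd := (ZMod.intCast_eq_intCast_iff_dvd_sub _ _ _).1 hij
  have habs : |b j - b i| < D := by
    rw [abs_lt]
    have := hb.lt_add i j
    have := hb.lt_add j i
    constructor <;> lia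
  exact hb.strictAnti.injective (sub_eq_zero.1 (Int.eq_zero_of_abs_lt_dvd hdvd habs)).symm

theorem succ_or_wrap_of_isAdjacent (hb : IsCyclicallyDecreasing D b) {φ : Site (Fin l)}
    (hwr : φ.w ≤ φ.r) (hpos : (b φ.i : ZMod D) + φ.w = b φ.j + (φ.r + 1))
    (hadj : φ.IsAdjacent fun c => (b c : ZMod D)) :
    (φ.j : ℕ) = φ.i + 1 ∧ b φ.i + φ.w = b φ.j + (φ.r + 1) ∨
      (φ.j : ℕ) = 0 ∧ (φ.i : ℕ) + 1 = l ∧ b φ.i + φ.w + D = b φ.j + (φ.r + 1) := by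
  obtain ⟨m, hm⟩ : (D : ℤ) ∣ b φ.j + (φ.r + 1) - (b φ.i + φ.w) := by
    rw [← ZMod.intCast_eq_intCast_iff_dvd_sub]
    push_cast
    exact hpos
  have hm' : b φ.j + (φ.r + 1) = b φ.i + φ.w + D * m := by lia
  have hDpos : (0 : ℤ) < D := lt_add_iff_pos_right _ |>.1 (hb.lt_add φ.i φ.i)
  have hm0 : 0 ≤ m := by
    by_contra! hneg
    have := hb.lt_add φ.i φ.j
    nlinarith
  have hij (h : m = 0) : φ.i < φ.j := hb.strictAnti.lt_iff_gt.1 (by rw [h] at hm; lia)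
  obtain hi | hi := (Nat.succ_le_iff.2 φ.i.2).lt_or_eq
  · have hle := hadj.le_of_lt hm' (k := ⟨φ.i + 1, hi⟩) (n := 0)
      (by simpa using hb.strictAnti (by simp [Fin.lt_def]))
    obtain rfl : m = 0 := by
      have := hb.lt_add φ.j ⟨φ.i + 1, hi⟩
      nlinarith
    have hj := hb.strictAnti.le_iff_ge.1 (by simpa using hle)
    have := hij rfl
    rw [Fin.le_def] at hj
    exact .inl ⟨by lia, by lia⟩
  · have hle := hadj.le_of_lt hm' (k := ⟨0, φ.i.pos⟩) (n := -1)
      (by have := hb.lt_add ⟨0, φ.i.pos⟩ φ.i; lia)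
    have h0 : b φ.j ≤ b ⟨0, φ.i.pos⟩ := hb.strictAnti.antitone (by simp [Fin.le_def])
    obtain rfl : m = 1 := by
      have hm1 : m ≤ 1 := by nlinarith
      have hne : m ≠ 0 := fun h => by have := hij h; lia
      lia
    have hj := hb.strictAnti.le_iff_ge.1 (by simpa using hle)
    rw [Fin.le_def] at hj
    exact .inr ⟨by simpa using hj, hi, by lia⟩

theorem columnEnd_of_isNoncrossing {P : Type*} [PartialOrder P] {L : Fin l → List P}
    (hb : IsCyclicallyDecreasing D b) (hL : IsNoncrossing (fun c => (b c : ZMod D)) L) :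
    IsCyclicallyDecreasing D (columnEnd b L) := by
  have hend (i j : Fin l) (B : ℤ) (hB : (B : ZMod D) = b j) (hlt : B < b i) :
      B + (L j).length < columnEnd b L i := by
    by_contra! hle
    rw [columnEnd] at hle
    obtain ⟨r, hr⟩ := Int.eq_ofNat_of_zero_le (a := b i + (L i).length - 1 - B) (by lia)
    have hrj : columnEntry (L j) r ≠ ⊤ := by rw [Ne, columnEntry_eq_top_iff]; lia
    refine hL ⟨i, j, (L i).length, r⟩ ⟨by lia, ?_, ?_⟩
    · have hcast := congrArg (Int.cast : ℤ → ZMod D) hr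
      push_cast [hB] at hcast
      linear_combination hcast
    · simp only [entries]
      rw [columnEntry_eq_top_iff.2 le_rfl]
      exact hrj.lt_top
  refine ⟨fun i j hij => hend i j _ rfl (hb.strictAnti hij), fun i j => ?_⟩
  have := hend j i (b i - D) (by simp) (by have := hb.lt_add i j; lia)
  simp only [columnEnd] at this ⊢
  lia

theorem eq_of_sum_eq (he : IsCyclicallyDecreasing D e) (ha : IsCyclicallyDecreasing D a)
    {π : Equiv.Perm (Fin l)} (hπ : ∀ c, (e c : ZMod D) = a (π c)) (hsum : ∑ c, e c = ∑ c, a c) :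
    e = a := by
  choose k hk using fun c => (ZMod.intCast_eq_intCast_iff_dvd_sub _ _ _).1 (hπ c).symm
  have hdiff (c c' : Fin l) : k c ≤ k c' + 1 := by
    have := he.lt_add c c'
    have := ha.lt_add (π c') (π c)
    have := hk c
    have := hk c'
    by_contra! hlt
    nlinarith
  have hsumk : ∑ c, k c = 0 := by
    obtain h0 | ⟨⟨c⟩⟩ := isEmpty_or_nonempty (Fin l)
    · exact Finset.sum_of_isEmpty _
    have hD : (D : ℤ) ≠ 0 := (lt_add_iff_pos_right _ |>.1 (he.lt_add c c)).ne'
    refine (mul_eq_zero.1 ?_).resolve_left hD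
    rw [Finset.mul_sum, ← Finset.sum_congr rfl fun c _ => hk c, Finset.sum_sub_distrib, hsum,
      Equiv.sum_comp π a, sub_self]
  have hea : e = a ∘ π := funext fun c => by
    have := hk c
    rw [eq_zero_of_sum_eq_zero_of_le_add_one hdiff hsumk c, mul_zero] at this
    exact sub_eq_zero.1 this
  refine (he.strictAnti.range_inj ha.strictAnti).1 ?_
  rw [hea, π.surjective.range_comp]

theorem det_endMatrix_columnEnd {P : Type*} [PartialOrder P] {L : Fin l → List P}
    (ha : IsCyclicallyDecreasing D a) (hb : IsCyclicallyDecreasing D b)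
    (hL : IsNoncrossing (fun c => (b c : ZMod D)) L)
    (hsum : ∑ c, columnEnd b L c = ∑ c, a c) :
    (endMatrix (fun c => (a c : ZMod D)) (columnEnd (fun c => (b c : ZMod D)) L)).det =
      if columnEnd b L = a then 1 else 0 := by
  have hcast : columnEnd (fun c => (b c : ZMod D)) L =
      fun c => ((columnEnd b L c : ℤ) : ZMod D) := by
    ext c
    simp [columnEnd]
  rw [hcast]
  split_ifs with h
  · rw [h, det_endMatrix_self ha.injective_intCast]
  · by_contra hne
    obtain ⟨π, hπ⟩ := exists_perm_of_det_endMatrix_ne_zero hne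
    exact h ((hb.columnEnd_of_isNoncrossing hL).eq_of_sum_eq ha hπ hsum)

end IsCyclicallyDecreasing

theorem sum_length_eq_of_mem_chainArrays {ι P : Type*} [Fintype ι] [Fintype P] [PartialOrder P]
    {f : P → ℕ} {L : ι → List P} (hL : L ∈ chainArrays ι f) :
    ∑ c, (L c).length = ∑ x, f x := by
  have hlen (c : ι) : (L c).length = ∑ x, (L c).count x := by
    rw [← List.sum_toFinset_count_eq_length]
    exact Finset.sum_subset (Finset.subset_univ _) fun x _ hx =>
      List.count_eq_zero_of_not_mem (by simpa using hx)
  simp only [hlen, ← (mem_chainArrays.1 hL).2]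
  exact Finset.sum_comm

theorem sum_det_endMatrix_eq_card {P : Type*} [Fintype P] [PartialOrder P]
    (h31 : ThreePlusOneFree P) {l D : ℕ} {a b : Fin l → ℤ} (ha : IsCyclicallyDecreasing D a)
    (hb : IsCyclicallyDecreasing D b) {f : P → ℕ} (hsum : ∑ c, b c + ∑ x, f x = ∑ c, a c) :
    ∑ L ∈ chainArrays (Fin l) f, (endMatrix (fun c => (a c : ZMod D))
        (columnEnd (fun c => (b c : ZMod D)) L)).det =
      {L ∈ chainArrays (Fin l) f | IsNoncrossing (fun c => (b c : ZMod D)) L ∧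
        columnEnd b L = a}.card := by
  rw [sum_det_endMatrix_eq_sum_isNoncrossing h31 hb.injective_intCast, ← Finset.filter_filter,
    Finset.card_filter, Nat.cast_sum]
  refine Finset.sum_congr rfl fun L hL => ?_
  rw [Finset.mem_filter] at hL
  rw [ha.det_endMatrix_columnEnd hb hL.2, Nat.cast_ite, Nat.cast_one, Nat.cast_zero]
  rw [← hsum, ← sum_length_eq_of_mem_chainArrays hL.1, Nat.cast_sum, ← Finset.sum_add_distrib]
  rfl

/-! ### Cylindric tableaux -/

section Conj

theorem IsPartition.finite_setOf_lt {f : ℕ → ℕ} (hf : IsPartition f) (c : ℕ) :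
    {i | c < f i}.Finite := by
  obtain ⟨-, N, hN⟩ := hf
  refine (Set.finite_lt_nat N).subset fun i hi => ?_
  by_contra hle
  have := hN i (not_lt.1 hle)
  have : c < f i := hi
  lia

theorem IsPartition.antitone_conj {f : ℕ → ℕ} (hf : IsPartition f) : Antitone (conj f) :=
  fun c _ hcc' => Set.ncard_le_ncard (fun _ hi => hcc'.trans_lt hi) (hf.finite_setOf_lt c)

theorem IsPartition.conj_le_conj {f g : ℕ → ℕ} (hg : IsPartition g) (hfg : ∀ i, f i ≤ g i)
    (c : ℕ) : conj f c ≤ conj g c :=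
  Set.ncard_le_ncard (fun i hi => lt_of_lt_of_le hi (hfg i)) (hg.finite_setOf_lt c)

/-- The height at which column `c` of the diagram of `f` ends, where column `c` is shifted up by
`c` so that the row conditions compare entries in successive heights. -/
noncomputable def columnHeight (f : ℕ → ℕ) {l : ℕ} (c : Fin l) : ℤ := conj f c - (c : ℕ)

theorem IsPartition.isCyclicallyDecreasing_columnHeight {f : ℕ → ℕ} (hf : IsPartition f)
    {l d : ℕ} (hd : conj f 0 ≤ conj f (l - 1) + d) :
    IsCyclicallyDecreasing (d + l) (columnHeight f : Fin l → ℤ) := by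
  refine ⟨fun i j hij => ?_, fun i j => ?_⟩
  · have := hf.antitone_conj (Fin.le_def.1 hij.le)
    rw [Fin.lt_def] at hij
    simp only [columnHeight]
    lia
  · have := hf.antitone_conj (Nat.zero_le i)
    have := hf.antitone_conj (show (j : ℕ) ≤ l - 1 by lia)
    simp only [columnHeight]
    lia

end Conj

section Tableaux

variable {P : Type*} {lam mu : ℕ → ℕ} {d : ℕ}

/-- The columns of a filling of a cylindric shape, as lists. -/
noncomputable def tabColumns (T : ∀ c : Fin (lam 0), Fin (conj lam c - conj mu c) → P)
    (c : Fin (lam 0)) : List P :=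
  List.ofFn (T c)

variable {T : ∀ c : Fin (lam 0), Fin (conj lam c - conj mu c) → P}

theorem entries_tabColumns {c : Fin (lam 0)} {m : ℕ} (hm : m < conj lam c - conj mu c) :
    entries (tabColumns T) c m = (T c ⟨m, hm⟩ : P) := by
  rw [entries, columnEntry_of_lt (by simpa [tabColumns] using hm)]
  simp [tabColumns]

theorem entries_tabColumns_eq_top_iff {c : Fin (lam 0)} {m : ℕ} :
    entries (tabColumns T) c m = ⊤ ↔ conj lam c - conj mu c ≤ m := by
  rw [entries, columnEntry_eq_top_iff, tabColumns, List.length_ofFn]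

theorem tabColumns_injective :
    Function.Injective (tabColumns (P := P) (lam := lam) (mu := mu)) := fun _ _ h =>
  funext fun c => List.ofFn_injective (congrFun h c)

theorem exists_tabColumns_eq {L : Fin (lam 0) → List P}
    (hL : ∀ c, (L c).length = conj lam c - conj mu c) :
    ∃ T : ∀ c : Fin (lam 0), Fin (conj lam c - conj mu c) → P, tabColumns T = L := by
  have hofFn (n : ℕ) (M : List P) (hM : M.length = n) : ∃ g : Fin n → P, List.ofFn g = M := by
    subst hM
    exact ⟨M.get, List.ofFn_get M⟩
  choose T hT using fun c => hofFn _ (L c) (hL c)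
  exact ⟨T, funext hT⟩

theorem tabCount_eq_sum_count [DecidableEq P] (x : P) :
    tabCount lam mu T x = ∑ c, (Finset.univ.val.map (T c)).count x := by
  refine Finset.sum_congr rfl fun c _ => ?_
  rw [Multiset.count_map, Finset.card_def, Finset.filter_val]
  simp only [eq_comm (a := x)]
  congr!

theorem sum_count_tabColumns (x : P) : ∑ c, (tabColumns T c).count x = tabCount lam mu T x := by
  simp only [tabCount_eq_sum_count, tabColumns, ← Multiset.coe_count, Fin.univ_val_map]

theorem columnEnd_columnHeight_eq_iff (hle : ∀ c, conj mu c ≤ conj lam c)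
    {L : Fin (lam 0) → List P} :
    columnEnd (columnHeight mu) L = columnHeight lam ↔
      ∀ c, (L c).length = conj lam c - conj mu c := by
  refine funext_iff.trans (forall_congr' fun c => ?_)
  have := hle c
  simp only [columnEnd, columnHeight]
  lia

variable [PartialOrder P]

theorem sortedLT_tabColumns_iff : (∀ c, (tabColumns T c).SortedLT) ↔ ∀ c, StrictMono (T c) :=
  forall_congr' fun _ => List.sortedLT_ofFn_iff

theorem IsCylTab.isNoncrossing (h31 : ThreePlusOneFree P) (hshape : IsCylShape lam mu d)
    (hT : IsCylTab lam mu d T) :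
    IsNoncrossing (fun c => (columnHeight mu c : ZMod (d + lam 0))) (tabColumns T) := by
  obtain ⟨hlam, hmu, -, -, hlamd, hmud, -⟩ := hshape
  obtain ⟨-, -, -, hcol, hrow, hwrap⟩ := hT
  have hcolumn : ∀ c, IsColumn (entries (tabColumns T) c) :=
    isColumn_entries_iff.2 (sortedLT_tabColumns_iff.2 fun c p q => hcol c p q)
  refine Site.not_isCrossing_of_isAdjacent h31.withTop hcolumn ?_
  rintro ⟨⟨i, hi⟩, ⟨j, hj⟩, w, r⟩ hadj hcross
  have hr : r < conj lam j - conj mu j := not_le.1 fun hle =>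
    hcross.ne_top (entries_tabColumns_eq_top_iff.2 hle)
  obtain ⟨hwr, hpos, hlt⟩ := hcross
  have hb := hmu.isCyclicallyDecreasing_columnHeight hmud
  obtain ⟨hij, hheight⟩ | ⟨hij, hil, hheight⟩ := hb.succ_or_wrap_of_isAdjacent hwr hpos hadj
  · obtain rfl : j = i + 1 := hij
    simp only [columnHeight] at hheight
    have hw : w < conj lam i - conj mu i := by
      have := hlam.antitone_conj i.le_succ
      lia
    rw [entries_tabColumns hr, entries_tabColumns (c := ⟨i, hi⟩) hw, WithTop.coe_lt_coe] at hlt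
    exact hrow ⟨i, hi⟩ hj ⟨w, hw⟩ ⟨r, hr⟩ (by simp only; lia) hlt
  · obtain rfl : j = 0 := hij
    obtain rfl : i = lam 0 - 1 := by simp only at hil; lia
    simp only [columnHeight] at hheight
    have hw : w < conj lam (lam 0 - 1) - conj mu (lam 0 - 1) := by lia
    rw [entries_tabColumns (c := ⟨0, hj⟩) hr, entries_tabColumns (c := ⟨lam 0 - 1, hi⟩) hw,
      WithTop.coe_lt_coe] at hlt
    exact hwrap hj ⟨w, hw⟩ ⟨r, hr⟩ (by simp only; lia) hlt

theorem IsNoncrossing.isCylTab (hshape : IsCylShape lam mu d) (hT : ∀ c, StrictMono (T c))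
    (h : IsNoncrossing (fun c => (columnHeight mu c : ZMod (d + lam 0))) (tabColumns T)) :
    IsCylTab lam mu d T := by
  obtain ⟨hlam, hmu, hle, -, hlamd, hmud, -⟩ := hshape
  have hrows {i j : Fin (lam 0)} (p : Fin (conj lam i - conj mu i))
      (q : Fin (conj lam j - conj mu j)) {m : ℤ} (hpq : (p : ℕ) ≤ q)
      (hheight : columnHeight mu i + p + (d + lam 0 : ℕ) * m = columnHeight mu j + (q + 1)) :
      ¬ T j q < T i p := fun hlt => by
    refine h ⟨i, j, p, q⟩ ⟨hpq, ?_, ?_⟩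
    · have hcast := congrArg (Int.cast : ℤ → ZMod (d + lam 0)) hheight
      push_cast at hcast
      have hD : (d + lam 0 : ZMod (d + lam 0)) = 0 := mod_cast ZMod.natCast_self (d + lam 0)
      rwa [hD, zero_mul, add_zero] at hcast
    · rwa [entries_tabColumns q.2, entries_tabColumns p.2, WithTop.coe_lt_coe]
  refine ⟨fun c _ => ⟨hlam.antitone_conj c.le_succ, hmu.antitone_conj c.le_succ⟩,
    fun c _ => hlam.conj_le_conj hle c, fun _ => ⟨hlamd, hmud⟩, fun c _ _ hpq => hT c hpq,
    fun c hc p q hpq => ?_, fun h0 p q hpq => ?_⟩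
  · have := hmu.antitone_conj c.1.le_succ
    exact hrows (j := ⟨c + 1, hc⟩) (m := 0) p q (by lia) (by simp only [columnHeight]; lia)
  · exact hrows (i := ⟨lam 0 - 1, Nat.sub_lt h0 Nat.one_pos⟩) (j := ⟨0, h0⟩) (m := 1) p q (by lia)
      (by simp only [columnHeight]; lia)

theorem card_isCylTab_eq [Finite P] (h31 : ThreePlusOneFree P) (hshape : IsCylShape lam mu d)
    (f : P → ℕ) :
    Nat.card {T : ∀ c : Fin (lam 0), Fin (conj lam c - conj mu c) → P //
        IsCylTab lam mu d T ∧ ∀ x, tabCount lam mu T x = f x} =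
      {L ∈ chainArrays (Fin (lam 0)) f |
        IsNoncrossing (fun c => (columnHeight mu c : ZMod (d + lam 0))) L ∧
          columnEnd (columnHeight mu) L = columnHeight lam}.card := by
  have hle := hshape.1.conj_le_conj hshape.2.2.1
  rw [← Nat.card_eq_finsetCard]
  refine Nat.card_eq_of_bijective (fun T => ⟨tabColumns T.1, ?_⟩) ⟨fun T T' h => ?_, fun L => ?_⟩
  · obtain ⟨T, hT, hcount⟩ := T
    rw [Finset.mem_filter, mem_chainArrays, columnEnd_columnHeight_eq_iff hle]
    exact ⟨⟨sortedLT_tabColumns_iff.2 fun c p q => hT.2.2.2.1 c p q,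
      fun x => (sum_count_tabColumns x).trans (hcount x)⟩, hT.isNoncrossing h31 hshape,
      fun c => List.length_ofFn⟩
  · exact Subtype.ext (tabColumns_injective (congrArg Subtype.val h))
  · obtain ⟨L, hL⟩ := L
    rw [Finset.mem_filter, mem_chainArrays, columnEnd_columnHeight_eq_iff hle] at hL
    obtain ⟨⟨hsort, hcount⟩, hcross, hlen⟩ := hL
    obtain ⟨T, rfl⟩ := exists_tabColumns_eq hlen
    exact ⟨⟨T, hcross.isCylTab hshape (sortedLT_tabColumns_iff.1 hsort),
      fun x => (sum_count_tabColumns x).symm.trans (hcount x)⟩, rfl⟩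

end Tableaux

/-! ### Multicolourings -/

theorem exists_sortedLT_toFinset_eq {P : Type*} [PartialOrder P]
    {S : Finset P} (hS : ∀ x ∈ S, ∀ y ∈ S, x ≤ y ∨ y ≤ x) :
    ∃ L : List P, L.SortedLT ∧ L.toFinset = S := by
  obtain ⟨r, hr, hle⟩ := extend_partialOrder (α := P) (· ≤ ·)
  refine ⟨S.sort r, List.Pairwise.sortedLT ?_, S.sort_toFinset r⟩
  refine List.Pairwise.imp_of_mem (fun {x y} hx hy hxy => ?_)
    ((S.pairwise_sort r).and (S.sort_nodup r))
  refine lt_of_le_of_ne ?_ hxy.2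
  obtain h | h := hS x ((S.mem_sort r).1 hx) y ((S.mem_sort r).1 hy)
  · exact h
  · exact (antisymm_of r hxy.1 (hle _ _ h)).le

section Multichrom

variable {P ι : Type*} [PartialOrder P] [Fintype ι]

theorem card_filter_mem_eq_sum_count {L : ι → List P} (hL : ∀ c, (L c).SortedLT) (x : P) :
    ({c | x ∈ L c} : Finset ι).card = ∑ c, (L c).count x := by
  rw [Finset.card_filter]
  exact Finset.sum_congr rfl fun c _ => ((hL c).nodup.count).symm

variable [Fintype P]

/-- The chromatic polynomial of the multicolourings `S` of the incomparability graph of `P` that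
assign to each `x` a set `S x` of `f x` colours; incomparable elements get disjoint sets. -/
noncomputable def multichromPoly (f : P → ℕ) (ι : Type*) [Fintype ι] : MvPolynomial ι ℤ :=
  ∑ S : P → Finset ι with (∀ x, (S x).card = f x) ∧
    ∀ x y, ¬(x ≤ y ∨ y ≤ x) → Disjoint (S x) (S y), ∏ x, ∏ c ∈ S x, X c

theorem chromPoly_eq_multichromPoly (N : ℕ) :
    chromPoly P N = multichromPoly (fun _ : P => 1) (Fin N) := by
  refine Finset.sum_nbij (fun κ x => {κ x}) (fun κ hκ => ?_) (fun κ _ κ' _ h => ?_)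
    (fun S hS => ?_) fun κ _ => by simp
  · simp only [Finset.mem_filter, Finset.mem_univ, true_and] at hκ ⊢
    refine ⟨fun x => Finset.card_singleton _, fun x y hxy => ?_⟩
    exact Finset.disjoint_singleton.2 (hκ x y (fun h => hxy (Or.inl h.le)) hxy)
  · exact funext fun x => Finset.singleton_injective (congrFun h x)
  · simp only [Finset.coe_filter, Finset.mem_univ, true_and, Set.mem_ofPred_eq] at hS
    choose κ hκ using fun x => Finset.card_eq_one.1 (hS.1 x)
    obtain rfl : (fun x => {κ x}) = S := funext fun x => (hκ x).symm
    refine ⟨κ, ?_, rfl⟩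
    simp only [Finset.coe_filter, Finset.mem_univ, true_and, Set.mem_ofPred_eq]
    exact fun x y _ hxy => Finset.disjoint_singleton.1 (hS.2 x y hxy)

theorem prod_esymm_eq_multichromPoly {Q : Type*} [Fintype Q] [LinearOrder Q] (f : Q → ℕ) :
    ∏ x, esymm ι ℤ (f x) = multichromPoly f ι := by
  simp only [esymm, Finset.prod_univ_sum, multichromPoly]
  refine Finset.sum_congr ?_ fun _ _ => rfl
  ext S
  simp [Fintype.mem_piFinset, le_total]

theorem prod_prod_X_eq_prod_X_pow_length {L : ι → List P} (hL : ∀ c, (L c).SortedLT) :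
    ∏ x, ∏ c with x ∈ L c, X c = ∏ c, (X c : MvPolynomial ι ℤ) ^ (L c).length := by
  rw [Finset.prod_comm' (t' := Finset.univ) (s' := fun c => (L c).toFinset) (by simp)]
  refine Finset.prod_congr rfl fun c _ => ?_
  rw [Finset.prod_const, List.toFinset_card_of_nodup (hL c).nodup]

/-- The elements that use a given colour form a chain, so a multicolouring is the same as an array
of chains. -/
theorem multichromPoly_eq_sum_chainArrays (f : P → ℕ) :
    multichromPoly f ι = ∑ L ∈ chainArrays ι f, ∏ c, X c ^ (L c).length := by
  refine (Finset.sum_nbij (fun L x => ({c | x ∈ L c} : Finset ι)) (fun L hL => ?_)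
    (fun L hL L' hL' h => ?_) (fun S hS => ?_) fun L hL => ?_).symm
  · obtain ⟨hsort, hcount⟩ := mem_chainArrays.1 hL
    rw [Finset.mem_filter]
    refine ⟨Finset.mem_univ _, fun x => ?_, fun x y hxy => ?_⟩
    · rw [card_filter_mem_eq_sum_count hsort, hcount]
    · rw [Finset.disjoint_filter]
      intro c _ hx hy
      obtain ⟨p, rfl⟩ := List.mem_iff_get.1 hx
      obtain ⟨q, rfl⟩ := List.mem_iff_get.1 hy
      exact hxy ((le_total p q).imp (fun h => (hsort c).monotone h) fun h => (hsort c).monotone h)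
  · have hsort := (mem_chainArrays.1 hL).1
    have hsort' := (mem_chainArrays.1 hL').1
    refine funext fun c => (hsort c).eq_of_mem_iff (hsort' c) fun x => ?_
    simpa using Finset.ext_iff.1 (congrFun h x) c
  · simp only [Finset.coe_filter, Finset.mem_univ, true_and, Set.mem_ofPred_eq] at hS
    have hchain (c : ι) : ∃ L : List P, L.SortedLT ∧ L.toFinset = ({x | c ∈ S x} : Finset P) := by
      refine exists_sortedLT_toFinset_eq fun x hx y hy => ?_
      by_contra hxy
      exact Finset.disjoint_left.1 (hS.2 x y hxy) (by simpa using hx) (by simpa using hy)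
    choose L hsort hL using hchain
    have hmem : (fun x => ({c | x ∈ L c} : Finset ι)) = S := by
      ext x c
      simp [← List.mem_toFinset, hL]
    refine ⟨L, mem_chainArrays.2 ⟨hsort, fun x => ?_⟩, hmem⟩
    rw [← card_filter_mem_eq_sum_count hsort, ← hS.1, ← hmem]
  · exact (prod_prod_X_eq_prod_X_pow_length (mem_chainArrays.1 hL).1).symm

end Multichrom

section JacobiTrudi

variable {ι R : Type*} [Fintype ι] [DecidableEq ι] [AddCommMonoidWithOne R]

/-- The linear functional that sends the monomial with exponents `m` to the determinant comparing
the ends `b + m` of columns of lengths `m` with the prescribed ends `a`. -/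
noncomputable def jacobiTrudi (a b : ι → R) : MvPolynomial ι ℤ →ₗ[ℤ] ℤ :=
  (basisMonomials ι ℤ).constr ℤ fun m => (endMatrix a fun c => b c + m c).det

theorem jacobiTrudi_prod_X_pow (a b : ι → R) (m : ι → ℕ) :
    jacobiTrudi a b (∏ c, X c ^ m c) = (endMatrix a fun c => b c + m c).det := by
  rw [prod_X_pow, ← congrFun (coe_basisMonomials ι ℤ), jacobiTrudi, Module.Basis.constr_basis]
  simp [Finsupp.indicator]

theorem jacobiTrudi_multichromPoly {P : Type*} [Fintype P] [PartialOrder P]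
    (h31 : ThreePlusOneFree P) {lam mu : ℕ → ℕ} {d : ℕ} (hshape : IsCylShape lam mu d) {f : P → ℕ}
    (hf : ∑ c : Fin (lam 0), (conj lam c - conj mu c) = ∑ x, f x) :
    jacobiTrudi (fun c => (columnHeight lam c : ZMod (d + lam 0)))
        (fun c => (columnHeight mu c : ZMod (d + lam 0))) (multichromPoly f (Fin (lam 0))) =
      Nat.card {T : ∀ c : Fin (lam 0), Fin (conj lam c - conj mu c) → P //
        IsCylTab lam mu d T ∧ ∀ x, tabCount lam mu T x = f x} := by
  obtain ⟨hlam, hmu, hle, -, hlamd, hmud, -⟩ := id hshape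
  have hsum : ∑ c : Fin (lam 0), columnHeight mu c + ∑ x, f x =
      ∑ c : Fin (lam 0), columnHeight lam c := by
    rw [← hf, Nat.cast_sum, ← Finset.sum_add_distrib]
    refine Finset.sum_congr rfl fun c _ => ?_
    have := hlam.conj_le_conj hle c
    simp only [columnHeight]
    lia
  have hcard := sum_det_endMatrix_eq_card h31 (hlam.isCyclicallyDecreasing_columnHeight hlamd)
    (hmu.isCyclicallyDecreasing_columnHeight hmud) hsum
  rw [← card_isCylTab_eq h31 hshape] at hcard
  rw [multichromPoly_eq_sum_chainArrays, map_sum, ← hcard]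
  exact Finset.sum_congr rfl fun L _ => jacobiTrudi_prod_X_pow _ _ _

end JacobiTrudi

/-! ### Monomial and elementary symmetric polynomials -/

section SymmetricPolynomials

theorem exists_ofSym_eq {n : ℕ} (ν : n.Partition) :
    ∃ (N : ℕ) (s : Sym (Fin N) n), Nat.Partition.ofSym s = ν := by
  set p := ν.parts.toList.get
  have hmap : Finset.univ.val.map p = ν.parts := by
    rw [Fin.univ_val_map, List.ofFn_get, Multiset.coe_toList]
  set s : Multiset (Fin ν.parts.toList.length) :=
    Finsupp.toMultiset (Finsupp.equivFunOnFinite.symm p) with hs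
  have hcount : s.count = p := by
    ext i
    simp [hs, Finsupp.count_toMultiset]
  have hpos (i) : 0 < p i := ν.parts_pos (Multiset.mem_toList.1 (List.get_mem _ i))
  have hcard : s.card = n := by
    rw [← Multiset.sum_count_eq_card (s := Finset.univ) (by simp), hcount, Finset.sum, hmap,
      ν.parts_sum]
  have hdedup : s.dedup = Finset.univ.val := by
    rw [← Multiset.toFinset_val]
    refine congrArg _ (Finset.eq_univ_of_forall fun i => ?_)
    rw [Multiset.mem_toFinset, ← Multiset.count_pos, congrFun hcount i]
    exact hpos i
  refine ⟨_, ⟨s, hcard⟩, Nat.Partition.ext ?_⟩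
  trans s.dedup.map s.count
  · rfl
  · rw [hdedup, hcount, hmap]

theorem esymmPart_ofSym {σ τ R : Type*} [Fintype σ] [Fintype τ] [DecidableEq τ] [CommRing R]
    {n : ℕ} (s : Sym τ n) :
    esymmPart σ R (Nat.Partition.ofSym s) = ∏ x, esymm σ R (s.1.count x) := by
  have hmap : esymmPart σ R (Nat.Partition.ofSym s) =
      ∏ x ∈ s.1.toFinset, esymm σ R (s.1.count x) := by
    simp [esymmPart, Nat.Partition.ofSym, Finset.prod]
  rw [hmap]
  refine Finset.prod_subset (Finset.subset_univ _) fun x _ hx => ?_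
  rw [Multiset.count_eq_zero_of_notMem (by simpa using hx), esymm_zero]

theorem prod_map_X {σ R : Type*} [DecidableEq σ] [CommSemiring R] (s : Multiset σ) :
    (s.map (X : σ → MvPolynomial σ R)).prod = monomial (Multiset.toFinsupp s) 1 := by
  induction s using Multiset.induction with
  | empty => simp
  | cons a s ih =>
    rw [Multiset.map_cons, Multiset.prod_cons, ih, X, monomial_mul, ← Multiset.singleton_add,
      map_add, Multiset.toFinsupp_singleton, one_mul]

theorem coeff_msymm {σ R : Type*} [Fintype σ] [DecidableEq σ] [CommRing R] {n : ℕ}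
    (s : Sym σ n) (μ : n.Partition) :
    coeff (Multiset.toFinsupp s.1) (msymm σ R μ) = if Nat.Partition.ofSym s = μ then 1 else 0 := by
  have hiff (t : {t : Sym σ n // Nat.Partition.ofSym t = μ}) :
      Multiset.toFinsupp t.1.1 = Multiset.toFinsupp s.1 ↔ t.1 = s := by
    rw [EmbeddingLike.apply_eq_iff_eq]
    exact Subtype.ext_iff.symm
  simp only [msymm, coeff_sum, prod_map_X, coeff_monomial, hiff]
  split_ifs with h
  · rw [Finset.sum_eq_single ⟨s, h⟩] <;> simp +contextual [Subtype.ext_iff]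
  · exact Finset.sum_eq_zero fun t _ => if_neg fun hts : t.1 = s => h (hts ▸ t.2)

theorem coeff_toFinsupp_uT {Q : Type*} [DecidableEq Q] {lam mu : ℕ → ℕ}
    (T : ∀ c : Fin (lam 0), Fin (conj lam c - conj mu c) → Q) (s : Multiset Q) :
    coeff (Multiset.toFinsupp s) (uT lam mu T) =
      if ∀ x, tabCount lam mu T x = s.count x then 1 else 0 := by
  have hprod : uT lam mu T = ((∑ c, Finset.univ.val.map (T c)).map X).prod := by
    rw [← Multiset.coe_mapAddMonoidHom, map_sum, Multiset.prod_sum]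
    simp only [uT, Finset.prod, Multiset.coe_mapAddMonoidHom, Multiset.map_map,
      Function.comp_def]
  rw [hprod, prod_map_X, coeff_monomial]
  refine if_congr ?_ rfl rfl
  rw [EmbeddingLike.apply_eq_iff_eq, Multiset.ext]
  simp only [Multiset.count_sum', tabCount_eq_sum_count]

end SymmetricPolynomials

section Pairing

variable {lam mu : ℕ → ℕ} {d n : ℕ} {a : n.Partition → ℤ}

/-- The case of a chain, where `multichromPoly` is a product of elementary symmetric polynomials. -/
theorem jacobiTrudi_esymmPart (hshape : IsCylShape lam mu d)
    (hn : ∑ c : Fin (lam 0), (conj lam c - conj mu c) = n)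
    (ha : ∀ N, (∑ T : {T : ∀ c : Fin (lam 0), Fin (conj lam c - conj mu c) → Fin N //
        IsCylTab lam mu d T}, uT lam mu T.1) = ∑ ν, C (a ν) * msymm (Fin N) ℤ ν)
    (ν : n.Partition) :
    jacobiTrudi (fun c => (columnHeight lam c : ZMod (d + lam 0)))
      (fun c => (columnHeight mu c : ZMod (d + lam 0))) (esymmPart (Fin (lam 0)) ℤ ν) = a ν := by
  obtain ⟨N, s, rfl⟩ := exists_ofSym_eq ν
  have hcoeff := congrArg (coeff (Multiset.toFinsupp s.1)) (ha N)
  simp only [coeff_sum, coeff_C_mul, coeff_msymm, coeff_toFinsupp_uT, mul_ite, mul_one, mul_zero,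
    Finset.sum_ite_eq, Finset.mem_univ, if_true] at hcoeff
  have hs : n = ∑ x, s.1.count x := by
    rw [Multiset.sum_count_eq_card (by simp)]
    exact s.2.symm
  rw [← hcoeff, esymmPart_ofSym, prod_esymm_eq_multichromPoly,
    jacobiTrudi_multichromPoly (.of_linearOrder _) hshape (hn.trans hs),
    ← Nat.card_congr (Equiv.subtypeSubtypeEquivSubtypeInter _
      fun T => ∀ x, tabCount lam mu T x = s.1.count x),
    Nat.card_eq_fintype_card, Fintype.card_subtype, Finset.card_filter, Nat.cast_sum]
  simp only [Nat.cast_ite, Nat.cast_one, Nat.cast_zero]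
  congr!

theorem stmt_15_general {P : Type*} [Fintype P] [PartialOrder P] (h31 : ThreePlusOneFree P)
    (hshape : IsCylShape lam mu d) (f : P → ℕ)
    (hn : ∑ c : Fin (lam 0), (conj lam c - conj mu c) = n) (hf : ∑ x, f x = n)
    (ha : ∀ N, (∑ T : {T : ∀ c : Fin (lam 0), Fin (conj lam c - conj mu c) → Fin N //
        IsCylTab lam mu d T}, uT lam mu T.1) = ∑ ν, C (a ν) * msymm (Fin N) ℤ ν)
    (coef : n.Partition → ℤ)
    (hcoef : ∀ N, multichromPoly f (Fin N) = ∑ ν, C (coef ν) * esymmPart (Fin N) ℤ ν) :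
    ∑ ν, a ν * coef ν =
      (Nat.card {T : ∀ c : Fin (lam 0), Fin (conj lam c - conj mu c) → P //
        IsCylTab lam mu d T ∧ ∀ x, tabCount lam mu T x = f x} : ℤ) := by
  rw [← jacobiTrudi_multichromPoly h31 hshape (hn.trans hf.symm), hcoef, map_sum]
  refine Finset.sum_congr rfl fun ν _ => ?_
  rw [← smul_eq_C_mul, map_smul, jacobiTrudi_esymmPart hshape hn ha, smul_eq_mul, mul_comm]

end Pairing

/-- for a `(3+1)`-free finite poset `P` with `|P| = n` and a
cylindric shape `λ/μ/d` with `n` cells, writing `s_{λ/μ/d} = Σ_ν a_ν m_ν` and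
`X_{inc(P)} = Σ_ν c^P_ν e_ν`, the sum `Σ_ν a_ν c^P_ν` equals the number of
standard cylindric `P`-tableaux of shape `λ/μ/d`; in particular it is
nonnegative. -/
theorem stmt_15 (P : Type*) [Fintype P] [PartialOrder P] (h31 : ThreePlusOneFree P)
    (lam mu : ℕ → ℕ) (d : ℕ) (hshape : IsCylShape lam mu d)
    (hn : (∑ col : Fin (lam 0), (conj lam col.1 - conj mu col.1)) = Fintype.card P)
    (a : Nat.Partition (Fintype.card P) → ℤ)
    (ha : ∀ N, (∑ T : {T : ∀ col : Fin (lam 0),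
            Fin (conj lam col - conj mu col) → Fin N // IsCylTab lam mu d T},
          uT lam mu T.1)
        = ∑ ν : Nat.Partition (Fintype.card P), C (a ν) * msymm (Fin N) ℤ ν)
    (coef : Nat.Partition (Fintype.card P) → ℤ)
    (hcoef : ∀ N, chromPoly P N
        = ∑ ν : Nat.Partition (Fintype.card P), C (coef ν) * esymmPart (Fin N) ℤ ν) :
    (∑ ν : Nat.Partition (Fintype.card P), a ν * coef ν)
      = (Nat.card {T : ∀ col : Fin (lam 0), Fin (conj lam col - conj mu col) → P //
          IsCylTab lam mu d T ∧ IsStandardTab lam mu T} : ℤ) :=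
  stmt_15_general h31 hshape (fun _ => 1) hn (by simp) ha coef fun N =>
    (chromPoly_eq_multichromPoly N).symm.trans (hcoef N)
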